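/- Let V be a real inner product space, W a linear subspace of V, A a finite set of pairwise orthogonal nonzero vectors of V, and C a finite set of vectors of V. Assume (W ∩ span A) + span C = W (sum of subspaces). Let c ∈ W ∩ span A and ϑ ∈ A with ⟨ϑ, c⟩ ≠ 0. Then (W ∩ span(A ∖ {ϑ})) + span(C ∪ {c}) = W. -/

import Mathlib

/-!
Only the inclusion of `W` in the new sum needs an argument. Given `x ∈ W ⊓ span A`, subtracting
`t • c` with `t = ⟪ϑ, x⟫ / ⟪ϑ, c⟫` leaves a vector of `W ⊓ span A` orthogonal to `ϑ`. As `A` is an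
orthogonal set of nonzero vectors, such a vector lies in `span (A ∖ {ϑ})`
(`mem_span_erase_of_inner_eq_zero`). Hence `W ⊓ span A ≤ (W ⊓ span (A ∖ {ϑ})) ⊔ span {c}`, and
adding `span C` to both sides gives the result.
-/

open scoped RealInnerProductSpace

/-- Orthogonality makes `⟪ϑ, x⟫` a nonzero multiple of the `ϑ`-coefficient of `x ∈ span A`,
so that coefficient vanishes as soon as `⟪ϑ, x⟫` does. -/
lemma mem_span_erase_of_inner_eq_zero {V : Type*}
    [NormedAddCommGroup V] [InnerProductSpace ℝ V] [DecidableEq V]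
    {A : Finset V} {ϑ x : V} (hϑ : ϑ ∈ A) (hϑ0 : ϑ ≠ 0)
    (horth : ∀ b ∈ A, ϑ ≠ b → ⟪ϑ, b⟫ = 0)
    (hx : x ∈ Submodule.span ℝ (A : Set V)) (hϑx : ⟪ϑ, x⟫ = 0) :
    x ∈ Submodule.span ℝ ((A.erase ϑ : Finset V) : Set V) := by
  rw [← Finset.insert_erase hϑ, Finset.coe_insert, Submodule.mem_span_insert] at hx
  obtain ⟨a, z, hz, rfl⟩ := hx
  have hϑz : ⟪ϑ, z⟫ = 0 := by
    have hle : Submodule.span ℝ ((A.erase ϑ : Finset V) : Set V) ≤ (ℝ ∙ ϑ)ᗮ := by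
      refine Submodule.span_le.2 fun b hb => ?_
      obtain ⟨hne, hbA⟩ := Finset.mem_erase.1 (Finset.mem_coe.1 hb)
      exact Submodule.mem_orthogonal_singleton_iff_inner_right.2 (horth b hbA hne.symm)
    exact Submodule.mem_orthogonal_singleton_iff_inner_right.1 (hle hz)
  have ha : a = 0 := by
    rw [inner_add_right, inner_smul_right, hϑz, add_zero] at hϑx
    exact (mul_eq_zero.1 hϑx).resolve_right (inner_self_ne_zero.2 hϑ0)
  simpa [ha] using hz

/-- Loop invariant of the greedy basis-finding algorithm: if
`(W ⊓ span A) ⊔ span C = W`, the elements of `A` are pairwise orthogonal and nonzero,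
`c ∈ W ⊓ span A`, and `ϑ ∈ A` has `⟪ϑ, c⟫ ≠ 0`, then
`(W ⊓ span (A ∖ {ϑ})) ⊔ span (C ∪ {c}) = W`. -/
theorem greedy_basis_loop_invariant {V : Type*}
    [NormedAddCommGroup V] [InnerProductSpace ℝ V] [DecidableEq V]
    (W : Submodule ℝ V) (A C : Finset V)
    (hA0 : ∀ a ∈ A, a ≠ 0)
    (hAorth : ∀ a ∈ A, ∀ b ∈ A, a ≠ b → ⟪a, b⟫ = 0)
    (hinv : (W ⊓ Submodule.span ℝ (A : Set V)) ⊔ Submodule.span ℝ (C : Set V) = W)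
    (c : V) (hc : c ∈ W ⊓ Submodule.span ℝ (A : Set V))
    (ϑ : V) (hϑ : ϑ ∈ A) (hϑc : ⟪ϑ, c⟫ ≠ 0) :
    (W ⊓ Submodule.span ℝ ((A.erase ϑ : Finset V) : Set V)) ⊔
        Submodule.span ℝ ((insert c C : Finset V) : Set V) = W := by
  have hspan : Submodule.span ℝ ((insert c C : Finset V) : Set V) =
      Submodule.span ℝ {c} ⊔ Submodule.span ℝ (C : Set V) := by
    rw [Finset.coe_insert, Submodule.span_insert]
  have hcW : Submodule.span ℝ {c} ≤ W :=
    (Submodule.span_singleton_le_iff_mem c W).2 hc.1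
  have hCW : Submodule.span ℝ (C : Set V) ≤ W := le_sup_right.trans hinv.le
  rw [hspan]
  refine le_antisymm (sup_le inf_le_left (sup_le hcW hCW)) ?_
  rw [← sup_assoc]
  refine hinv.ge.trans (sup_le_sup_right (fun x hx => ?_) _)
  -- This multiple of `c` cancels the component of `x` along `ϑ`.
  set t : ℝ := ⟪ϑ, x⟫ / ⟪ϑ, c⟫ with ht
  have hmem : x - t • c ∈ W ⊓ Submodule.span ℝ (A : Set V) :=
    Submodule.sub_mem _ hx (Submodule.smul_mem _ t hc)
  have hzero : ⟪ϑ, x - t • c⟫ = 0 := by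
    rw [inner_sub_right, inner_smul_right, ht, div_mul_cancel₀ _ hϑc, sub_self]
  exact Submodule.mem_sup.2 ⟨x - t • c,
    ⟨hmem.1, mem_span_erase_of_inner_eq_zero hϑ (hA0 ϑ hϑ) (hAorth ϑ hϑ) hmem.2 hzero⟩,
    t • c, Submodule.smul_mem _ t (Submodule.mem_span_singleton_self c), sub_add_cancel _ _⟩
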